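/- arXiv:2106.09943 — 2 statements merged into one kernel-verified Lean document; each statement's English description precedes it below -/
import Mathlib

section
/- Lipschitz continuity of the NCE loss in the embeddings: Let k ≥ 1, d ≥ 1 and B > 0. Let Z = (z, z⁺, z₁⁻, …, z_k⁻) and W = (w, w⁺, w₁⁻, …, w_k⁻) be tuples of vectors in ℝ^d, each vector having ℓ₁-norm at most B. Define φ(Z) = ℓ({zᵀ(z⁺ − z_i⁻)}_{i=1}^k) and φ(W) analogously. Then |φ(Z) − φ(W)| ≤ 4B · ‖Z − W‖_∞, where ‖Z − W‖_∞ is the maximum absolute difference over all d(k+2) coordinates of the tuples. -/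
/-!
Both losses are monotone in `-v` and grow by at most `c` when every coordinate of `v` drops by at
most `c ≥ 0` (`hingeLoss_le_add`, `logisticLoss_le_add`), so they are 1-Lipschitz in the sup norm.
The bilinear score satisfies
`zᵀ(z⁺ - z⁻) - wᵀ(w⁺ - w⁻) = (z - w)ᵀ(z⁺ - z⁻) + wᵀ((z⁺ - w⁺) - (z⁻ - w⁻))`,
and the `ℓ₁`/`ℓ_∞` Hölder inequality bounds each of the two terms by `2Bε` (`score_sub_le`).
-/

/-- Multiclass hinge loss of the family `(v i)_{i ∈ S}`. -/
noncomputable def hingeLoss {ι : Type*} (S : Finset ι) (v : ι → ℝ) : ℝ :=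
  if h : S.Nonempty then max 0 (1 + S.sup' h (fun i => -v i)) else 0

/-- Logistic loss of the family `(v i)_{i ∈ S}`. -/
noncomputable def logisticLoss {ι : Type*} (S : Finset ι) (v : ι → ℝ) : ℝ :=
  Real.log (1 + ∑ i ∈ S, Real.exp (-v i))

theorem hingeLoss_le_add {ι : Type*} (S : Finset ι) (u v : ι → ℝ) (c : ℝ) (hc : 0 ≤ c)
    (h : ∀ i, v i - u i ≤ c) : hingeLoss S u ≤ hingeLoss S v + c := by
  unfold hingeLoss
  split_ifs with hS
  · have key : S.sup' hS (fun i => -u i) ≤ S.sup' hS (fun i => -v i) + c := by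
      refine Finset.sup'_le _ _ fun i hi => ?_
      have h1 := Finset.le_sup' (fun i => -v i) hi
      have h2 := h i
      linarith
    refine max_le ?_ ?_
    · have := le_max_left 0 (1 + S.sup' hS (fun i => -v i))
      linarith
    · have := le_max_right 0 (1 + S.sup' hS (fun i => -v i))
      linarith
  · linarith

/-- The argument of the logarithm grows by a factor of at most `exp c`; the summand `1` is
absorbed because `1 ≤ exp c`. -/
theorem logisticLoss_le_add {ι : Type*} (S : Finset ι) (u v : ι → ℝ) (c : ℝ) (hc : 0 ≤ c)
    (h : ∀ i, v i - u i ≤ c) : logisticLoss S u ≤ logisticLoss S v + c := by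
  unfold logisticLoss
  have hu : 0 < 1 + ∑ i ∈ S, Real.exp (-u i) := by positivity
  have hv : 0 < 1 + ∑ i ∈ S, Real.exp (-v i) := by positivity
  have hsum : ∑ i ∈ S, Real.exp (-u i) ≤ (∑ i ∈ S, Real.exp (-v i)) * Real.exp c := by
    rw [Finset.sum_mul]
    refine Finset.sum_le_sum fun i _ => ?_
    rw [← Real.exp_add]
    exact Real.exp_le_exp.mpr (by linarith [h i])
  calc Real.log (1 + ∑ i ∈ S, Real.exp (-u i))
      ≤ Real.log ((1 + ∑ i ∈ S, Real.exp (-v i)) * Real.exp c) := by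
        refine Real.log_le_log hu ?_
        linarith [Real.one_le_exp hc]
    _ = _ := by rw [Real.log_mul hv.ne' (Real.exp_pos c).ne', Real.log_exp]

theorem score_sub_le {d : ℕ} (B ε : ℝ) (hε : 0 ≤ ε) (z p m w q n : Fin d → ℝ)
    (hp : ∑ j, |p j| ≤ B) (hm : ∑ j, |m j| ≤ B) (hw : ∑ j, |w j| ≤ B)
    (hzw : ∀ j, |z j - w j| ≤ ε) (hpq : ∀ j, |p j - q j| ≤ ε) (hmn : ∀ j, |m j - n j| ≤ ε) :
    |∑ j, z j * (p j - m j) - ∑ j, w j * (q j - n j)| ≤ 4 * B * ε := by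
  rw [← Finset.sum_sub_distrib]
  calc |∑ j, (z j * (p j - m j) - w j * (q j - n j))|
      ≤ ∑ j, |z j * (p j - m j) - w j * (q j - n j)| := Finset.abs_sum_le_sum_abs _ _
    _ ≤ ∑ j, (ε * (|p j| + |m j|) + |w j| * (ε + ε)) := by
        refine Finset.sum_le_sum fun j _ => ?_
        have e : z j * (p j - m j) - w j * (q j - n j)
            = (z j - w j) * (p j - m j) + w j * ((p j - q j) - (m j - n j)) := by ring
        rw [e]
        refine (abs_add_le _ _).trans ?_
        rw [abs_mul, abs_mul]
        exact add_le_add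
          (mul_le_mul (hzw j) (abs_sub _ _) (abs_nonneg _) hε)
          (mul_le_mul_of_nonneg_left
            ((abs_sub _ _).trans (add_le_add (hpq j) (hmn j))) (abs_nonneg _))
    _ = ε * (∑ j, |p j| + ∑ j, |m j|) + (∑ j, |w j|) * (ε + ε) := by
        rw [Finset.sum_add_distrib, ← Finset.mul_sum, Finset.sum_add_distrib, Finset.sum_mul]
    _ ≤ ε * (B + B) + B * (ε + ε) := by gcongr
    _ = 4 * B * ε := by ring

/-- Lipschitz continuity of the NCE loss in the embeddings: if all the vectors in the
tuples `Z = (z, z⁺, z₁⁻, …, z_k⁻)` and `W = (w, w⁺, w₁⁻, …, w_k⁻)` in `ℝ^d` have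
`ℓ₁`-norm at most `B`, and `ε` is the maximum absolute coordinatewise difference
`‖Z - W‖_∞`, then `|φ(Z) - φ(W)| ≤ 4B·ε` for `φ(Z) = ℓ({zᵀ(z⁺ - z_i⁻)}_{i=1}^k)`,
where `ℓ` is either the multiclass hinge loss or the logistic loss. -/
theorem nce_loss_lipschitz {k d : ℕ} (hk : 1 ≤ k) (hd : 1 ≤ d) (B : ℝ) (hB : 0 < B)
    (z zp w wp : Fin d → ℝ) (zm wm : Fin k → Fin d → ℝ)
    (hz : ∑ j, |z j| ≤ B) (hzp : ∑ j, |zp j| ≤ B) (hzm : ∀ i, ∑ j, |zm i j| ≤ B)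
    (hw : ∑ j, |w j| ≤ B) (hwp : ∑ j, |wp j| ≤ B) (hwm : ∀ i, ∑ j, |wm i j| ≤ B)
    (ε : ℝ)
    (hε : ε =
      max (max (Finset.univ.sup' (Finset.univ_nonempty_iff.mpr ⟨⟨0, hd⟩⟩)
                  (fun j => |z j - w j|))
               (Finset.univ.sup' (Finset.univ_nonempty_iff.mpr ⟨⟨0, hd⟩⟩)
                  (fun j => |zp j - wp j|)))
          ((Finset.univ : Finset (Fin k × Fin d)).sup'
              (Finset.univ_nonempty_iff.mpr ⟨(⟨0, hk⟩, ⟨0, hd⟩)⟩)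
              (fun q => |zm q.1 q.2 - wm q.1 q.2|))) :
    |hingeLoss (Finset.univ : Finset (Fin k)) (fun i => ∑ j, z j * (zp j - zm i j)) -
        hingeLoss (Finset.univ : Finset (Fin k)) (fun i => ∑ j, w j * (wp j - wm i j))| ≤
      4 * B * ε ∧
    |logisticLoss (Finset.univ : Finset (Fin k)) (fun i => ∑ j, z j * (zp j - zm i j)) -
        logisticLoss (Finset.univ : Finset (Fin k)) (fun i => ∑ j, w j * (wp j - wm i j))| ≤
      4 * B * ε := by
  have h1 : ∀ j, |z j - w j| ≤ ε := fun j => by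
    rw [hε]
    exact le_max_of_le_left (le_max_of_le_left
      (Finset.le_sup' (fun j => |z j - w j|) (Finset.mem_univ j)))
  have h2 : ∀ j, |zp j - wp j| ≤ ε := fun j => by
    rw [hε]
    exact le_max_of_le_left (le_max_of_le_right
      (Finset.le_sup' (fun j => |zp j - wp j|) (Finset.mem_univ j)))
  have h3 : ∀ i j, |zm i j - wm i j| ≤ ε := fun i j => by
    rw [hε]
    exact le_max_of_le_right
      (Finset.le_sup' (fun q : Fin k × Fin d => |zm q.1 q.2 - wm q.1 q.2|)
        (Finset.mem_univ (i, j)))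
  have hε0 : 0 ≤ ε := (abs_nonneg _).trans (h1 ⟨0, hd⟩)
  have hc : 0 ≤ 4 * B * ε := by positivity
  have key := fun i => abs_le.mp
    (score_sub_le B ε hε0 z zp (zm i) w wp (wm i) hzp (hzm i) hw h1 h2 (h3 i))
  have hzw : ∀ i, ∑ j, z j * (zp j - zm i j) - ∑ j, w j * (wp j - wm i j) ≤ 4 * B * ε :=
    fun i => (key i).2
  have hwz : ∀ i, ∑ j, w j * (wp j - wm i j) - ∑ j, z j * (zp j - zm i j) ≤ 4 * B * ε :=
    fun i => by linarith [(key i).1]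
  constructor
  · exact abs_sub_le_iff.mpr
      ⟨sub_le_iff_le_add'.mpr (hingeLoss_le_add _ _ _ _ hc hwz),
        sub_le_iff_le_add'.mpr (hingeLoss_le_add _ _ _ _ hc hzw)⟩
  · exact abs_sub_le_iff.mpr
      ⟨sub_le_iff_le_add'.mpr (logisticLoss_le_add _ _ _ _ hc hwz),
        sub_le_iff_le_add'.mpr (logisticLoss_le_add _ _ _ _ hc hzw)⟩
end

section
/- Binomial sum inequality for the expected maximum of colliding signs: For every real p with 0 ≤ p ≤ 1 and every integer k ≥ 1, ∑_{t=1}^{k} C(k,t) · p^t · (1−p)^{k−t} · (1 − 2·(1/2)^t) ≥ (1/2) · ((1 − (1−p)^k) − k·p·(1−p)^{k−1}), where C(k,t) is the binomial coefficient. Equivalently, 1 + (1−p)^k − 2(1−p/2)^k ≥ (1/2)(1 − (1−p)^k − kp(1−p)^{k−1}). -/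
/-!
Let `w t = C(k,t) p^t (1-p)^(k-t)` be the binomial weights. By the binomial theorem
(`sum_Icc_one_choose`), the left-hand side is `1/2` times the total weight of `t ≥ 2`, and the sum
`∑ w t (1 - 2 (1/2)^t)` over `t ≥ 1` has the closed form `1 + (1-p)^k - 2 (1-p/2)^k`.
The inequality then holds term by term: the factor `1 - 2 (1/2)^t` vanishes at `t = 1` and is at
least `1/2` for `t ≥ 2`.
-/

/-- The binomial theorem with the `t = 0` term moved to the other side. -/
lemma sum_Icc_one_choose (x q : ℝ) (k : ℕ) :
    ∑ t ∈ Finset.Icc 1 k, (k.choose t : ℝ) * x^t * q^(k - t) = (x + q)^k - q^k := by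
  rw [add_pow, Finset.range_eq_Ico, Finset.sum_eq_sum_Ico_succ_bot (by omega)]
  have h : Finset.Ico (0 + 1) (k + 1) = Finset.Icc 1 k := by rw [zero_add]; rfl
  rw [h]
  simp only [pow_zero, Nat.choose_zero_right, Nat.sub_zero, Nat.cast_one, one_mul, mul_one,
    add_sub_cancel_left]
  exact Finset.sum_congr rfl fun t _ => by ring

/-- Binomial sum inequality for the expected maximum of colliding signs:
for `0 ≤ p ≤ 1` and `k ≥ 1`,
`∑_{t=1}^k C(k,t) p^t (1-p)^{k-t} (1 - 2·(1/2)^t) ≥ (1/2)((1-(1-p)^k) - k p (1-p)^{k-1})`;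
equivalently `1 + (1-p)^k - 2(1-p/2)^k ≥ (1/2)(1 - (1-p)^k - k p (1-p)^{k-1})`. -/
theorem binomial_sum_inequality (p : ℝ) (hp0 : 0 ≤ p) (hp1 : p ≤ 1)
    (k : ℕ) (hk : 1 ≤ k) :
    (1/2) * ((1 - (1 - p)^k) - (k : ℝ) * p * (1 - p)^(k - 1)) ≤
        ∑ t ∈ Finset.Icc 1 k, (k.choose t : ℝ) * p^t * (1 - p)^(k - t) * (1 - 2 * (1/2)^t) ∧
    (1/2) * (1 - (1 - p)^k - (k : ℝ) * p * (1 - p)^(k - 1)) ≤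
        1 + (1 - p)^k - 2 * (1 - p/2)^k := by
  have hone := sum_Icc_one_choose p (1 - p) k
  have hhalf := sum_Icc_one_choose (p / 2) (1 - p) k
  rw [show p + (1 - p) = 1 by ring, one_pow] at hone
  rw [show p / 2 + (1 - p) = 1 - p / 2 by ring] at hhalf
  have hclosed : ∑ t ∈ Finset.Icc 1 k,
      (k.choose t : ℝ) * p^t * (1 - p)^(k - t) * (1 - 2 * (1/2)^t)
        = 1 + (1 - p)^k - 2 * (1 - p/2)^k := by
    have hsplit : ∑ t ∈ Finset.Icc 1 k,
        (k.choose t : ℝ) * p^t * (1 - p)^(k - t) * (1 - 2 * (1/2)^t)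
          = ∑ t ∈ Finset.Icc 1 k, (k.choose t : ℝ) * p^t * (1 - p)^(k - t)
            - 2 * ∑ t ∈ Finset.Icc 1 k, (k.choose t : ℝ) * (p/2)^t * (1 - p)^(k - t) := by
      rw [Finset.mul_sum, ← Finset.sum_sub_distrib]
      refine Finset.sum_congr rfl fun t _ => ?_
      rw [div_eq_mul_one_div p 2, mul_pow]
      ring
    rw [hsplit, hone, hhalf]
    ring
  have hmain : (1/2) * ((1 - (1 - p)^k) - (k : ℝ) * p * (1 - p)^(k - 1)) ≤
      ∑ t ∈ Finset.Icc 1 k, (k.choose t : ℝ) * p^t * (1 - p)^(k - t) * (1 - 2 * (1/2)^t) := by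
    -- the weight at `t = 1`, written as a sum over the same index set
    have hfirst : (k : ℝ) * p * (1 - p)^(k - 1) = ∑ t ∈ Finset.Icc 1 k,
        if t = 1 then (k.choose t : ℝ) * p^t * (1 - p)^(k - t) else 0 := by
      rw [Finset.sum_ite_eq' (Finset.Icc 1 k) 1, if_pos (by simpa using hk)]
      simp
    rw [← hone, hfirst, ← Finset.sum_sub_distrib, Finset.mul_sum]
    refine Finset.sum_le_sum fun t ht => ?_
    have ht1 : 1 ≤ t := (Finset.mem_Icc.mp ht).1
    split_ifs with h
    · subst h
      norm_num
    · have hw : 0 ≤ (k.choose t : ℝ) * p^t * (1 - p)^(k - t) := by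
        have : 0 ≤ 1 - p := sub_nonneg.mpr hp1
        positivity
      have hpow : ((1:ℝ)/2)^t ≤ (1/2)^2 :=
        pow_le_pow_of_le_one (by norm_num) (by norm_num) (by omega)
      nlinarith
  exact ⟨hmain, hclosed ▸ hmain⟩
end
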